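/- arXiv:2002.08939 — 9 statements merged into one kernel-verified Lean document; each statement's English description precedes it below -/
import Mathlib

section
/- Let φ : ℝ → ℝ be three times continuously differentiable with φ'(x) > 0 for all x. Let F, G : ℝ × ℝ → ℝ and let v : ℝ × ℝ → ℝ be twice continuously differentiable with v_tt(s,y) = F(y, v(s,y))·v_xx(s,y) + G(y, v(s,y)) for all (s,y) ∈ ℝ². Define u(t,x) := φ'(x)^{-1/2}·v(t, φ(x)), f(x,w) := φ'(x)^{-2}·F(φ(x), φ'(x)^{1/2}·w), and g(x,w) := φ'(x)^{-1/2}·G(φ(x), φ'(x)^{1/2}·w) + ((2φ'''(x)φ'(x) − 3φ''(x)²)/(4φ'(x)⁴))·w·F(φ(x), φ'(x)^{1/2}·w). Then u_tt(t,x) = f(x, u(t,x))·u_xx(t,x) + g(x, u(t,x)) for all (t,x) ∈ ℝ². -/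
/-!
Write `p = φ'` and `r = p ^ (-1/2)`, so that `r' = -r p' / (2 p)`. For a fixed time the function
`u = r · (V ∘ φ)` satisfies `u' = -(r p' / (2 p)) · (V ∘ φ) + r p · (V' ∘ φ)`. In the second
derivative the two contributions containing `V' ∘ φ` cancel, which is what the weight
`p ^ (-1/2)` is chosen for, leaving

`u'' = r p² · (V'' ∘ φ) + (3 p'² - 2 p'' p) / (4 p²) · u`.

Multiplied by `p ^ (-2) F`, the first term becomes `r F V''`, and the second is cancelled by the
term of `g` that is linear in `w`. Since `p ^ (1/2) · u = V ∘ φ`, the arguments of `F` and `G` are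
those at which the original equation holds, and `u_tt = r · v_tt` because `r` and `φ` do not
depend on `t`.
-/

/-- Partial derivative with respect to the first argument. -/
noncomputable def pdt (u : ℝ → ℝ → ℝ) : ℝ → ℝ → ℝ := fun t x => deriv (fun s => u s x) t

/-- Partial derivative with respect to the second argument. -/
noncomputable def pdx (u : ℝ → ℝ → ℝ) : ℝ → ℝ → ℝ := fun t x => deriv (fun y => u t y) x

theorem hasDerivAt_rpow_neg_half {p : ℝ → ℝ} {p' x : ℝ} (hp : HasDerivAt p p' x)
    (hpos : 0 < p x) :
    HasDerivAt (fun y => p y ^ (-(1 : ℝ) / 2)) (-(p x ^ (-(1 : ℝ) / 2) * p' / (2 * p x))) x := by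
  convert hp.rpow_const (p := -(1 : ℝ) / 2) (Or.inl hpos.ne') using 1
  rw [Real.rpow_sub_one hpos.ne']
  field_simp

/-- The second derivative of `φ' ^ (-1/2) · (V ∘ φ)` contains no term in `V'`; the coefficient of
the zeroth-order term is minus one half of the Schwarzian derivative of `φ`. -/
theorem deriv_deriv_weighted_comp {φ V : ℝ → ℝ} (hφ : ContDiff ℝ 3 φ)
    (hφpos : ∀ x, 0 < deriv φ x) (hV : ContDiff ℝ 2 V) (x : ℝ) :
    deriv (deriv fun y => deriv φ y ^ (-(1 : ℝ) / 2) * V (φ y)) x =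
      deriv φ x ^ (-(1 : ℝ) / 2) * deriv φ x ^ 2 * deriv (deriv V) (φ x) +
      (3 * deriv (deriv φ) x ^ 2 - 2 * deriv (deriv (deriv φ)) x * deriv φ x) /
        (4 * deriv φ x ^ 2) * (deriv φ x ^ (-(1 : ℝ) / 2) * V (φ x)) := by
  have hφ1 : ContDiff ℝ 2 (deriv φ) := hφ.deriv' (n := 2)
  have hφ2 : ContDiff ℝ 1 (deriv (deriv φ)) := hφ1.deriv' (n := 1)
  have hV1 : ContDiff ℝ 1 (deriv V) := hV.deriv' (n := 1)
  have d0 (y) : HasDerivAt φ (deriv φ y) y := (hφ.differentiable (by norm_num) y).hasDerivAt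
  have d1 (y) : HasDerivAt (deriv φ) (deriv (deriv φ) y) y :=
    (hφ1.differentiable (by norm_num) y).hasDerivAt
  have d2 (y) : HasDerivAt (deriv (deriv φ)) (deriv (deriv (deriv φ)) y) y :=
    (hφ2.differentiable (by norm_num) y).hasDerivAt
  have e0 (y) : HasDerivAt (fun y => V (φ y)) (deriv V (φ y) * deriv φ y) y :=
    ((hV.differentiable (by norm_num) (φ y)).hasDerivAt).comp y (d0 y)
  have e1 (y) : HasDerivAt (fun y => deriv V (φ y)) (deriv (deriv V) (φ y) * deriv φ y) y :=
    ((hV1.differentiable (by norm_num) (φ y)).hasDerivAt).comp y (d0 y)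
  have hr (y) := hasDerivAt_rpow_neg_half (d1 y) (hφpos y)
  have h1 : (deriv fun y => deriv φ y ^ (-(1 : ℝ) / 2) * V (φ y)) = fun y =>
      -(deriv φ y ^ (-(1 : ℝ) / 2) * deriv (deriv φ) y / (2 * deriv φ y)) * V (φ y) +
        deriv φ y ^ (-(1 : ℝ) / 2) * (deriv V (φ y) * deriv φ y) :=
    funext fun y => ((hr y).mul (e0 y)).deriv
  rw [h1]
  have hp := (hφpos x).ne'
  have h2 := (((((hr x).fun_mul (d2 x)).fun_div ((d1 x).const_mul 2)
    (mul_ne_zero two_ne_zero hp)).fun_neg).fun_mul (e0 x)).fun_add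
      ((hr x).fun_mul ((e1 x).fun_mul (d1 x)))
  rw [h2.deriv]
  field_simp
  ring

theorem equivalence_transformation_D_phi
    (φ : ℝ → ℝ) (hφ : ContDiff ℝ 3 φ) (hφpos : ∀ x, 0 < deriv φ x)
    (F G : ℝ → ℝ → ℝ) (v : ℝ → ℝ → ℝ)
    (hv : ContDiff ℝ 2 fun p : ℝ × ℝ => v p.1 p.2)
    (hpde : ∀ s y, pdt (pdt v) s y = F y (v s y) * pdx (pdx v) s y + G y (v s y))
    (u : ℝ → ℝ → ℝ)
    (hu : u = fun t x => (deriv φ x) ^ (-(1 : ℝ) / 2) * v t (φ x))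
    (f : ℝ → ℝ → ℝ)
    (hf : f = fun x w => ((deriv φ x) ^ (2 : ℕ))⁻¹ * F (φ x) ((deriv φ x) ^ ((1 : ℝ) / 2) * w))
    (g : ℝ → ℝ → ℝ)
    (hg : g = fun x w =>
        (deriv φ x) ^ (-(1 : ℝ) / 2) * G (φ x) ((deriv φ x) ^ ((1 : ℝ) / 2) * w)
        + ((2 * deriv (deriv (deriv φ)) x * deriv φ x - 3 * (deriv (deriv φ) x) ^ 2)
            / (4 * (deriv φ x) ^ 4)) * w * F (φ x) ((deriv φ x) ^ ((1 : ℝ) / 2) * w)) :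
    ∀ t x, pdt (pdt u) t x = f x (u t x) * pdx (pdx u) t x + g x (u t x) := by
  intro t x
  have hp := hφpos x
  have hV : ContDiff ℝ 2 (v t) := hv.comp (contDiff_prodMk_right t)
  have hxx : pdx (pdx u) t x =
      deriv (deriv fun y => deriv φ y ^ (-(1 : ℝ) / 2) * v t (φ y)) x := by
    rw [hu]
    rfl
  have htt : pdt (pdt u) t x = deriv φ x ^ (-(1 : ℝ) / 2) * pdt (pdt v) t (φ x) := by
    simp only [hu, pdt, deriv_const_mul_field]
  have hqr : deriv φ x ^ ((1 : ℝ) / 2) * (deriv φ x ^ (-(1 : ℝ) / 2) * v t (φ x)) = v t (φ x) := by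
    rw [← mul_assoc, ← Real.rpow_add hp]
    norm_num
  have hvxx : pdx (pdx v) t (φ x) = deriv (deriv (v t)) (φ x) := rfl
  rw [hxx, deriv_deriv_weighted_comp hφ hφpos hV, htt, hpde, hvxx, hf, hg, hu]
  simp only [hqr]
  field_simp
  ring
end

section
/- For a smooth function ζ : ℝ → ℝ, let 𝒟(ζ) : ℝ⁵ → ℝ⁵ be the vector field defined by 𝒟(ζ)(t,x,u,f,g) = (0, ζ(x), ½ζ'(x)u, 2ζ'(x)f, ½ζ'(x)g − ½ζ'''(x)u·f). Then for any smooth ζ¹, ζ² : ℝ → ℝ, the Lie bracket of the vector fields 𝒟(ζ¹) and 𝒟(ζ²) equals 𝒟(ζ¹·(ζ²)' − (ζ¹)'·ζ²); that is, for every p ∈ ℝ⁵, D(𝒟(ζ²))(p)(𝒟(ζ¹)(p)) − D(𝒟(ζ¹))(p)(𝒟(ζ²)(p)) = 𝒟(ζ¹(ζ²)' − (ζ¹)'ζ²)(p), where DV(p) denotes the Fréchet derivative of V at p. -/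
/-!
Writing `ζ', …, ζ''''` for the derivatives of `ζ`, the directional derivative of `DVec ζ` at `p`
is an explicit polynomial in `p`, the direction and these derivatives (`fderiv_DVec_apply`).
Likewise `h = ζ₁ ζ₂' - ζ₁' ζ₂` satisfies `h' = ζ₁ ζ₂'' - ζ₁'' ζ₂` and
`h''' = 2 ζ₁' ζ₂''' + ζ₁ ζ₂'''' - ζ₁'''' ζ₂ - 2 ζ₁''' ζ₂'`, the terms `ζ₁'' ζ₂''` cancelling.
After these substitutions each of the five components is a polynomial identity. In the `∂g`
component the factors `2` in `h'''` match the weights of `u`, `f` and `g` through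
`1 / 2 + 2 - 1 / 2 = 2`.
-/

/-- The vector field 𝒟(ζ) = ζ∂x + ½ζ'u∂u + 2ζ'f∂f + ½(ζ'g − ζ'''uf)∂g
on ℝ⁵ with coordinates (t, x, u, f, g). -/
noncomputable def DVec (ζ : ℝ → ℝ) (p : Fin 5 → ℝ) : Fin 5 → ℝ :=
  ![0, ζ (p 1), (1 / 2) * deriv ζ (p 1) * p 2, 2 * deriv ζ (p 1) * p 3,
    (1 / 2) * deriv ζ (p 1) * p 4 - (1 / 2) * deriv (deriv (deriv ζ)) (p 1) * p 2 * p 3]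

lemma contDiff_deriv_of_smooth {ζ : ℝ → ℝ} (h : ContDiff ℝ (⊤ : ℕ∞) ζ) :
    ContDiff ℝ (⊤ : ℕ∞) (deriv ζ) :=
  (contDiff_infty_iff_deriv.1 h).2

lemma hasDerivAt_of_smooth {ζ : ℝ → ℝ} (h : ContDiff ℝ (⊤ : ℕ∞) ζ) (x : ℝ) :
    HasDerivAt ζ (deriv ζ x) x :=
  (contDiff_infty_iff_deriv.1 h).1.differentiableAt.hasDerivAt

lemma fderiv_DVec_apply {ζ : ℝ → ℝ} (h : ContDiff ℝ (⊤ : ℕ∞) ζ) (p v : Fin 5 → ℝ) :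
    fderiv ℝ (DVec ζ) p v =
      ![0, deriv ζ (p 1) * v 1,
        (1 / 2) * (deriv (deriv ζ) (p 1) * v 1 * p 2 + deriv ζ (p 1) * v 2),
        2 * (deriv (deriv ζ) (p 1) * v 1 * p 3 + deriv ζ (p 1) * v 3),
        (1 / 2) * (deriv (deriv ζ) (p 1) * v 1 * p 4 + deriv ζ (p 1) * v 4)
          - (1 / 2) * (deriv (deriv (deriv (deriv ζ))) (p 1) * v 1 * p 2 * p 3
            + deriv (deriv (deriv ζ)) (p 1) * (v 2 * p 3 + p 2 * v 3))] := by
  have h1 := contDiff_deriv_of_smooth h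
  have h3 := contDiff_deriv_of_smooth (contDiff_deriv_of_smooth h1)
  have pr (i : Fin 5) : HasFDerivAt (fun q : Fin 5 → ℝ => q i)
      (ContinuousLinearMap.proj (R := ℝ) (φ := fun _ : Fin 5 => ℝ) i) p :=
    hasFDerivAt_apply i p
  have c0 := (hasDerivAt_of_smooth h (p 1)).comp_hasFDerivAt p (pr 1)
  have c1 := (hasDerivAt_of_smooth h1 (p 1)).comp_hasFDerivAt p (pr 1)
  have c3 := (hasDerivAt_of_smooth h3 (p 1)).comp_hasFDerivAt p (pr 1)
  have d2 := (c1.const_mul (1 / 2)).mul (pr 2)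
  have d3 := (c1.const_mul 2).mul (pr 3)
  have d4 := ((c1.const_mul (1 / 2)).mul (pr 4)).sub
    (((c3.const_mul (1 / 2)).mul (pr 2)).mul (pr 3))
  have hd : DifferentiableAt ℝ (DVec ζ) p := by
    rw [differentiableAt_pi]
    intro i
    fin_cases i
    · exact differentiableAt_const (0 : ℝ)
    · exact c0.differentiableAt
    · exact d2.differentiableAt
    · exact d3.differentiableAt
    · exact d4.differentiableAt
  have key (i : Fin 5) {L : (Fin 5 → ℝ) →L[ℝ] ℝ}
      (hL : HasFDerivAt (fun q => DVec ζ q i) L p) : fderiv ℝ (DVec ζ) p v i = L v := by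
    rw [hL.unique (hasFDerivAt_pi'.1 hd.hasFDerivAt i)]
    rfl
  ext i
  fin_cases i
  · exact key 0 (hasFDerivAt_const (0 : ℝ) p)
  · refine (key 1 c0).trans ?_
    simp
  · refine (key 2 d2).trans ?_
    simp
    ring
  · refine (key 3 d3).trans ?_
    simp
    ring
  · refine (key 4 d4).trans ?_
    simp
    ring

theorem commutator_D_D
    (ζ₁ ζ₂ : ℝ → ℝ) (hζ₁ : ContDiff ℝ (⊤ : ℕ∞) ζ₁) (hζ₂ : ContDiff ℝ (⊤ : ℕ∞) ζ₂) :
    ∀ p : Fin 5 → ℝ,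
      fderiv ℝ (DVec ζ₂) p (DVec ζ₁ p) - fderiv ℝ (DVec ζ₁) p (DVec ζ₂ p)
        = DVec (fun x => ζ₁ x * deriv ζ₂ x - deriv ζ₁ x * ζ₂ x) p := by
  intro p
  have a1 := contDiff_deriv_of_smooth hζ₁
  have a2 := contDiff_deriv_of_smooth a1
  have a3 := contDiff_deriv_of_smooth a2
  have b1 := contDiff_deriv_of_smooth hζ₂
  have b2 := contDiff_deriv_of_smooth b1
  have b3 := contDiff_deriv_of_smooth b2
  have A0 := hasDerivAt_of_smooth hζ₁
  have A1 := hasDerivAt_of_smooth a1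
  have A2 := hasDerivAt_of_smooth a2
  have A3 := hasDerivAt_of_smooth a3
  have B0 := hasDerivAt_of_smooth hζ₂
  have B1 := hasDerivAt_of_smooth b1
  have B2 := hasDerivAt_of_smooth b2
  have B3 := hasDerivAt_of_smooth b3
  have e1 : deriv (fun x => ζ₁ x * deriv ζ₂ x - deriv ζ₁ x * ζ₂ x) =
      fun x => ζ₁ x * deriv (deriv ζ₂) x - deriv (deriv ζ₁) x * ζ₂ x := by
    ext x
    refine (((A0 x).mul (B1 x)).sub ((A1 x).mul (B0 x))).deriv.trans ?_
    ring
  have e2 : deriv (fun x => ζ₁ x * deriv (deriv ζ₂) x - deriv (deriv ζ₁) x * ζ₂ x) =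
      fun x => deriv ζ₁ x * deriv (deriv ζ₂) x + ζ₁ x * deriv (deriv (deriv ζ₂)) x
        - (deriv (deriv (deriv ζ₁)) x * ζ₂ x + deriv (deriv ζ₁) x * deriv ζ₂ x) := by
    ext x
    exact (((A0 x).mul (B2 x)).sub ((A2 x).mul (B0 x))).deriv
  have e3 (x : ℝ) :
      deriv (fun x => deriv ζ₁ x * deriv (deriv ζ₂) x + ζ₁ x * deriv (deriv (deriv ζ₂)) x
        - (deriv (deriv (deriv ζ₁)) x * ζ₂ x + deriv (deriv ζ₁) x * deriv ζ₂ x)) x =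
      2 * deriv ζ₁ x * deriv (deriv (deriv ζ₂)) x
        + ζ₁ x * deriv (deriv (deriv (deriv ζ₂))) x
        - deriv (deriv (deriv (deriv ζ₁))) x * ζ₂ x
        - 2 * deriv (deriv (deriv ζ₁)) x * deriv ζ₂ x := by
    refine ((((A1 x).mul (B2 x)).add ((A0 x).mul (B3 x))).sub
      (((A3 x).mul (B0 x)).add ((A2 x).mul (B1 x)))).deriv.trans ?_
    ring
  rw [fderiv_DVec_apply hζ₂, fderiv_DVec_apply hζ₁]
  unfold DVec
  rw [e1, e2, e3]
  ext i
  fin_cases i <;> simp <;> ring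
end

section
/- Let ε ∈ ℝ, let μ : ℝ → ℝ, and let a, b, c, d ∈ ℝ with (ad − bc)² = 1. Let u : ℝ × ℝ → ℝ be twice differentiable with u(t,x) ≠ 0 and u_tt(t,x) = ε·u(t,x)^{-4}·u_xx(t,x) + μ(x)·u(t,x)^{-3} for all (t,x) ∈ ℝ². Then the function v(t,x) := (ct + d)·u((at + b)/(ct + d), x) satisfies v(t,x) ≠ 0 and v_tt(t,x) = ε·v(t,x)^{-4}·v_xx(t,x) + μ(x)·v(t,x)^{-3} at every point (t,x) with ct + d ≠ 0. -/
theorem hasDerivAt_moebius (a b c d t : ℝ) (ht : c * t + d ≠ 0) :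
    HasDerivAt (fun t => (a * t + b) / (c * t + d)) ((a * d - b * c) / (c * t + d) ^ 2) t := by
  have h1 : HasDerivAt (fun t : ℝ => a * t + b) a t := by
    simpa using ((hasDerivAt_id t).const_mul a).add_const b
  have h2 : HasDerivAt (fun t : ℝ => c * t + d) c t := by
    simpa using ((hasDerivAt_id t).const_mul c).add_const d
  refine (h1.div h2 ht).congr_deriv ?_
  ring

theorem hasDerivAt_mul_comp_moebius (a b c d t : ℝ) (ht : c * t + d ≠ 0) (w : ℝ → ℝ)
    (hw : Differentiable ℝ w) :
    HasDerivAt (fun t => (c * t + d) * w ((a * t + b) / (c * t + d)))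
      (c * w ((a * t + b) / (c * t + d))
        + (a * d - b * c) * deriv w ((a * t + b) / (c * t + d)) / (c * t + d)) t := by
  have h2 : HasDerivAt (fun t : ℝ => c * t + d) c t := by
    simpa using ((hasDerivAt_id t).const_mul c).add_const d
  have h3 := (hw ((a * t + b) / (c * t + d))).hasDerivAt.comp t (hasDerivAt_moebius a b c d t ht)
  refine (h2.mul h3).congr_deriv ?_
  simp only [Function.comp]
  field_simp

/-- Under a Möbius change of variable, a function of weight `-1` has a second derivative that
transforms without lower-order terms. -/
theorem deriv_deriv_moebius (a b c d t : ℝ) (ht : c * t + d ≠ 0) (w : ℝ → ℝ)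
    (hw : Differentiable ℝ w) (hw' : Differentiable ℝ (deriv w)) :
    deriv (deriv fun t => (c * t + d) * w ((a * t + b) / (c * t + d))) t
      = (a * d - b * c) ^ 2 * deriv (deriv w) ((a * t + b) / (c * t + d)) / (c * t + d) ^ 3 := by
  -- The formula for the first derivative holds only off the pole, hence only near `t`.
  have hev : (deriv fun t => (c * t + d) * w ((a * t + b) / (c * t + d))) =ᶠ[nhds t]
      fun t => c * w ((a * t + b) / (c * t + d))
        + (a * d - b * c) * deriv w ((a * t + b) / (c * t + d)) / (c * t + d) := by
    have hc : ContinuousAt (fun t : ℝ => c * t + d) t := by fun_prop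
    filter_upwards [hc.eventually_ne ht] with r hr
    exact (hasDerivAt_mul_comp_moebius a b c d r hr w hw).deriv
  rw [hev.deriv_eq]
  have h2 : HasDerivAt (fun t : ℝ => c * t + d) c t := by
    simpa using ((hasDerivAt_id t).const_mul c).add_const d
  have hm := hasDerivAt_moebius a b c d t ht
  have h3 := (hw ((a * t + b) / (c * t + d))).hasDerivAt.comp t hm
  have h4 := (hw' ((a * t + b) / (c * t + d))).hasDerivAt.comp t hm
  refine (((h3.const_mul c).add ((h4.const_mul (a * d - b * c)).div h2 ht)).congr_deriv ?_).deriv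
  simp only [Function.comp]
  generalize deriv (deriv w) ((a * t + b) / (c * t + d)) = W2
  generalize deriv w ((a * t + b) / (c * t + d)) = W1
  field_simp
  ring

theorem moebius_time_symmetry_T2a
    (ε : ℝ) (μ : ℝ → ℝ) (a b c d : ℝ) (habcd : (a * d - b * c) ^ 2 = 1)
    (u : ℝ → ℝ → ℝ)
    (hu : ContDiff ℝ 2 fun p : ℝ × ℝ => u p.1 p.2)
    (hune : ∀ t x, u t x ≠ 0)
    (hpde : ∀ t x, pdt (pdt u) t x
      = ε * (u t x ^ 4)⁻¹ * pdx (pdx u) t x + μ x * (u t x ^ 3)⁻¹)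
    (v : ℝ → ℝ → ℝ)
    (hv : v = fun t x => (c * t + d) * u ((a * t + b) / (c * t + d)) x) :
    ∀ t x, c * t + d ≠ 0 →
      v t x ≠ 0 ∧
      pdt (pdt v) t x = ε * (v t x ^ 4)⁻¹ * pdx (pdx v) t x + μ x * (v t x ^ 3)⁻¹ := by
  intro t x ht
  have hne := hune ((a * t + b) / (c * t + d)) x
  subst hv
  refine ⟨mul_ne_zero ht hne, ?_⟩
  have hw2 : ContDiff ℝ 2 fun s => u s x :=
    hu.comp (contDiff_id.prodMk contDiff_const)
  have hw : Differentiable ℝ fun s => u s x := hw2.differentiable (by norm_num)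
  have hw' : Differentiable ℝ (deriv fun s => u s x) := by
    have h : ContDiff ℝ (1 + 1) fun s => u s x := by
      rw [one_add_one_eq_two]; exact hw2
    exact (contDiff_succ_iff_deriv.1 h).2.2.differentiable (by norm_num)
  have htt := deriv_deriv_moebius a b c d t ht (fun s => u s x) hw hw'
  have hP := hpde ((a * t + b) / (c * t + d)) x
  have hxx : pdx (pdx fun t x => (c * t + d) * u ((a * t + b) / (c * t + d)) x) t x
      = (c * t + d) * pdx (pdx u) ((a * t + b) / (c * t + d)) x := by
    simp only [pdx, deriv_const_mul_field]
  have hP' : deriv (deriv fun s => u s x) ((a * t + b) / (c * t + d)) = _ := hP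
  rw [hxx]
  refine htt.trans ?_
  rw [habcd, hP']
  beta_reduce
  generalize pdx (pdx u) ((a * t + b) / (c * t + d)) x = X at *
  generalize u ((a * t + b) / (c * t + d)) x = U at *
  field_simp
end

section
/- Let ε ∈ ℝ and μ : ℝ → ℝ. Let v : ℝ × ℝ → ℝ be twice differentiable such that v(s,x) ≠ 0 and v_tt(s,x) = ε·v(s,x)^{-4}·v_xx(s,x) + μ(x)·v(s,x)^{-3} for all (s,x) with s > 0. Then the function u(t,x) := e^{-t}·v(e^{2t}/2, x) satisfies u(t,x) ≠ 0 and u_tt(t,x) = ε·u(t,x)^{-4}·u_xx(t,x) + μ(x)·u(t,x)^{-3} + u(t,x) for all (t,x) ∈ ℝ². -/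
/-!
Fix `x` and put `g s = v s x`, `s = e^{2t}/2`, so that `ds/dt = e^{2t}`. Differentiating
`e^{-t} g(s)` once gives `-e^{-t} g(s) + e^t g'(s)`; differentiating again, the two terms
`e^t g'(s)` cancel and `e^{-t} g(s) + e^{3t} g''(s)` remains. Since `s > 0`, the equation for `v`
applies at `(s, x)`, and the factor `e^{3t}` is absorbed by the scaling of the right-hand side:
`u⁻⁴ u_xx = e^{3t} v⁻⁴ v_xx` and `u⁻³ = e^{3t} v⁻³`.
-/

theorem hasDerivAt_half_exp_two_mul (t : ℝ) :
    HasDerivAt (fun t => Real.exp (2 * t) / 2) (Real.exp (2 * t)) t := by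
  have h := (((hasDerivAt_id t).const_mul 2).exp).div_const 2
  refine h.congr_deriv ?_
  simp

theorem hasDerivAt_exp_neg' (t : ℝ) :
    HasDerivAt (fun t => Real.exp (-t)) (-Real.exp (-t)) t := by
  refine ((hasDerivAt_id t).neg.exp).congr_deriv ?_
  simp

/-- The cancellation of the first-order terms: the second derivative of `e^{-t} g(e^{2t}/2)`
involves only `g` and `g''`. -/
theorem deriv_deriv_exp_neg_mul_comp {g : ℝ → ℝ} (hg : ContDiff ℝ 2 g) (t : ℝ) :
    deriv (deriv fun t => Real.exp (-t) * g (Real.exp (2 * t) / 2)) t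
      = Real.exp (-t) * g (Real.exp (2 * t) / 2)
        + Real.exp t ^ 3 * deriv (deriv g) (Real.exp (2 * t) / 2) := by
  have hg0 : Differentiable ℝ g := hg.differentiable (by norm_num)
  have hg1 : Differentiable ℝ (deriv g) := by
    have h : ContDiff ℝ (1 + 1) g := by simpa [one_add_one_eq_two] using hg
    exact ((contDiff_succ_iff_deriv.1 h).2.2).differentiable (by norm_num)
  have hE (t : ℝ) : Real.exp (2 * t) = Real.exp t ^ 2 := by
    rw [← Real.exp_nat_mul]; norm_num
  have first : (deriv fun t => Real.exp (-t) * g (Real.exp (2 * t) / 2)) = fun t =>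
      -Real.exp (-t) * g (Real.exp (2 * t) / 2)
        + Real.exp t * deriv g (Real.exp (2 * t) / 2) := by
    funext t
    have h := (hasDerivAt_exp_neg' t).mul
      ((hg0 _).hasDerivAt.comp t (hasDerivAt_half_exp_two_mul t))
    refine h.deriv.trans ?_
    simp only [Function.comp, hE, Real.exp_neg]
    field_simp
  rw [first]
  have h := ((hasDerivAt_exp_neg' t).neg.mul
      ((hg0 _).hasDerivAt.comp t (hasDerivAt_half_exp_two_mul t))).add
    ((Real.hasDerivAt_exp t).mul
      ((hg1 _).hasDerivAt.comp t (hasDerivAt_half_exp_two_mul t)))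
  refine h.deriv.trans ?_
  simp only [Function.comp, Pi.neg_apply, hE, Real.exp_neg]
  field_simp
  ring


theorem admissible_transformation_T2b
    (ε : ℝ) (μ : ℝ → ℝ) (v : ℝ → ℝ → ℝ)
    (hv : ContDiff ℝ 2 fun p : ℝ × ℝ => v p.1 p.2)
    (hvpde : ∀ s x, 0 < s →
      v s x ≠ 0 ∧
      pdt (pdt v) s x = ε * (v s x ^ 4)⁻¹ * pdx (pdx v) s x + μ x * (v s x ^ 3)⁻¹)
    (u : ℝ → ℝ → ℝ)
    (hu : u = fun t x => Real.exp (-t) * v (Real.exp (2 * t) / 2) x) :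
    ∀ t x, u t x ≠ 0 ∧
      pdt (pdt u) t x
        = ε * (u t x ^ 4)⁻¹ * pdx (pdx u) t x + μ x * (u t x ^ 3)⁻¹ + u t x := by
  intro t x
  obtain ⟨hne, hpde⟩ := hvpde (Real.exp (2 * t) / 2) x (by positivity)
  have hg : ContDiff ℝ 2 fun s => v s x := hv.comp (contDiff_id.prodMk contDiff_const)
  have htt : pdt (pdt u) t x = Real.exp (-t) * v (Real.exp (2 * t) / 2) x
      + Real.exp t ^ 3 * pdt (pdt v) (Real.exp (2 * t) / 2) x := by
    subst hu
    exact deriv_deriv_exp_neg_mul_comp hg t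
  have hxx : pdx (pdx u) t x = Real.exp (-t) * pdx (pdx v) (Real.exp (2 * t) / 2) x := by
    subst hu
    simp only [pdx, deriv_const_mul_field]
  have hut : u t x = Real.exp (-t) * v (Real.exp (2 * t) / 2) x := by rw [hu]
  rw [htt, hxx, hut, hpde]
  refine ⟨mul_ne_zero (Real.exp_ne_zero _) hne, ?_⟩
  rw [Real.exp_neg]
  field_simp
  ring
end

section
/- Let ε ∈ ℝ and μ : ℝ → ℝ. Let v : ℝ × ℝ → ℝ be twice differentiable such that v(s,x) ≠ 0 and v_tt(s,x) = ε·v(s,x)^{-4}·v_xx(s,x) + μ(x)·v(s,x)^{-3} for all (s,x) ∈ ℝ². Then the function u(t,x) := cos(t)·v(tan(t), x) satisfies u(t,x) ≠ 0 and u_tt(t,x) = ε·u(t,x)^{-4}·u_xx(t,x) + μ(x)·u(t,x)^{-3} − u(t,x) for all (t,x) with −π/2 < t < π/2. -/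
/-- On `(-π/2, π/2)` the transformation `f ↦ cos t · f (tan t)` carries `f''` to `u'' + u`, up to
the factor `cos³ t`. -/
theorem deriv_deriv_cos_mul_comp_tan {f : ℝ → ℝ} (hf : ContDiff ℝ 2 f) {t : ℝ}
    (h1 : -(Real.pi / 2) < t) (h2 : t < Real.pi / 2) :
    deriv (deriv fun s => Real.cos s * f (Real.tan s)) t
      = (Real.cos t ^ 3)⁻¹ * deriv (deriv f) (Real.tan t) - Real.cos t * f (Real.tan t) := by
  have hf1 : ∀ y, HasDerivAt f (deriv f y) y := fun y =>
    (hf.differentiable (by norm_num) y).hasDerivAt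
  have hd : ContDiff ℝ 1 (deriv f) :=
    ((contDiff_succ_iff_deriv (n := 1)).1 (by simpa [one_add_one_eq_two] using hf)).2.2
  have hf2 : ∀ y, HasDerivAt (deriv f) (deriv (deriv f) y) y := fun y =>
    (hd.differentiable (by norm_num) y).hasDerivAt
  have hc : Real.cos t ≠ 0 := (Real.cos_pos_of_mem_Ioo ⟨h1, h2⟩).ne'
  have hfirst : ∀ s, Real.cos s ≠ 0 →
      HasDerivAt (fun s => Real.cos s * f (Real.tan s))
        (-Real.sin s * f (Real.tan s) + (Real.cos s)⁻¹ * deriv f (Real.tan s)) s := by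
    intro s hs
    have h := (Real.hasDerivAt_cos s).mul ((hf1 (Real.tan s)).comp s (Real.hasDerivAt_tan hs))
    refine h.congr_deriv ?_
    simp only [Function.comp]
    field_simp
  -- The first-derivative formula is needed near `t`, where `cos` stays nonzero.
  have hev : (deriv fun s => Real.cos s * f (Real.tan s)) =ᶠ[nhds t]
      fun s => -Real.sin s * f (Real.tan s) + (Real.cos s)⁻¹ * deriv f (Real.tan s) := by
    filter_upwards [Real.continuous_cos.continuousAt.eventually_ne hc] with s hs
    exact (hfirst s hs).deriv
  rw [hev.deriv_eq]
  have h := ((Real.hasDerivAt_sin t).neg.mul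
      ((hf1 (Real.tan t)).comp t (Real.hasDerivAt_tan hc))).add
    (((Real.hasDerivAt_cos t).inv hc).mul
      ((hf2 (Real.tan t)).comp t (Real.hasDerivAt_tan hc)))
  refine (h.congr_deriv ?_).deriv
  simp only [Function.comp, Pi.neg_apply, Pi.inv_apply]
  field_simp
  ring

theorem admissible_transformation_T2c
    (ε : ℝ) (μ : ℝ → ℝ) (v : ℝ → ℝ → ℝ)
    (hv : ContDiff ℝ 2 fun p : ℝ × ℝ => v p.1 p.2)
    (hvne : ∀ s x, v s x ≠ 0)
    (hvpde : ∀ s x,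
      pdt (pdt v) s x = ε * (v s x ^ 4)⁻¹ * pdx (pdx v) s x + μ x * (v s x ^ 3)⁻¹)
    (u : ℝ → ℝ → ℝ)
    (hu : u = fun t x => Real.cos t * v (Real.tan t) x) :
    ∀ t x, -(Real.pi / 2) < t → t < Real.pi / 2 →
      u t x ≠ 0 ∧
      pdt (pdt u) t x
        = ε * (u t x ^ 4)⁻¹ * pdx (pdx u) t x + μ x * (u t x ^ 3)⁻¹ - u t x := by
  subst hu
  intro t x h1 h2
  have hc : Real.cos t ≠ 0 := (Real.cos_pos_of_mem_Ioo ⟨h1, h2⟩).ne'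
  refine ⟨mul_ne_zero hc (hvne _ _), ?_⟩
  have hf : ContDiff ℝ 2 fun s => v s x := hv.comp (contDiff_id.prodMk contDiff_const)
  have htt := deriv_deriv_cos_mul_comp_tan hf h1 h2
  have hxx : pdx (pdx fun t x => Real.cos t * v (Real.tan t) x) t x
      = Real.cos t * pdx (pdx v) (Real.tan t) x := by
    simp only [pdx, deriv_const_mul_field]
  have hp := hvpde (Real.tan t) x
  have hne := hvne (Real.tan t) x
  rw [hxx]
  change deriv (deriv fun s => Real.cos s * v (Real.tan s) x) t = _
  rw [htt]
  change _ * pdt (pdt v) (Real.tan t) x - _ = _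
  rw [hp]
  field_simp
end

section
/- Let h : ℝ → ℝ and let v : ℝ × ℝ → ℝ be twice continuously differentiable with v_tt(s,y) = v_xx(s,y) + h(v(s,y)) for all (s,y) ∈ ℝ². Then the function u(t,x) := v(e^{-x}·sinh(t), e^{-x}·cosh(t)) satisfies u_tt(t,x) = u_xx(t,x) + e^{-2x}·h(u(t,x)) for all (t,x) ∈ ℝ². -/
theorem pdt_eq_fderiv {w : ℝ → ℝ → ℝ} (hw : Differentiable ℝ fun p : ℝ × ℝ => w p.1 p.2)
    (s y : ℝ) : pdt w s y = fderiv ℝ (fun p : ℝ × ℝ => w p.1 p.2) (s, y) (1, 0) := by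
  have h1 : HasDerivAt (fun r : ℝ => (r, y)) ((1 : ℝ), (0 : ℝ)) s :=
    (hasDerivAt_id s).prodMk (hasDerivAt_const s y)
  exact ((hw (s, y)).hasFDerivAt.comp_hasDerivAt s h1).deriv

theorem pdx_eq_fderiv {w : ℝ → ℝ → ℝ} (hw : Differentiable ℝ fun p : ℝ × ℝ => w p.1 p.2)
    (s y : ℝ) : pdx w s y = fderiv ℝ (fun p : ℝ × ℝ => w p.1 p.2) (s, y) (0, 1) := by
  have h1 : HasDerivAt (fun r : ℝ => (s, r)) ((0 : ℝ), (1 : ℝ)) y :=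
    (hasDerivAt_const y s).prodMk (hasDerivAt_id y)
  exact ((hw (s, y)).hasFDerivAt.comp_hasDerivAt y h1).deriv

theorem contDiff_pdt {w : ℝ → ℝ → ℝ} (hw : ContDiff ℝ 2 fun p : ℝ × ℝ => w p.1 p.2) :
    ContDiff ℝ 1 fun p : ℝ × ℝ => pdt w p.1 p.2 := by
  simp only [pdt_eq_fderiv (hw.differentiable (by norm_num))]
  exact (hw.fderiv_right (m := 1) (by norm_num)).clm_apply contDiff_const

theorem contDiff_pdx {w : ℝ → ℝ → ℝ} (hw : ContDiff ℝ 2 fun p : ℝ × ℝ => w p.1 p.2) :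
    ContDiff ℝ 1 fun p : ℝ × ℝ => pdx w p.1 p.2 := by
  simp only [pdx_eq_fderiv (hw.differentiable (by norm_num))]
  exact (hw.fderiv_right (m := 1) (by norm_num)).clm_apply contDiff_const

/-- The chain rule along a plane curve, in terms of the partial derivatives `pdt` and `pdx`. -/
theorem hasDerivAt_comp_pd {w : ℝ → ℝ → ℝ} (hw : Differentiable ℝ fun p : ℝ × ℝ => w p.1 p.2)
    {a b : ℝ → ℝ} {a' b' r : ℝ} (ha : HasDerivAt a a' r) (hb : HasDerivAt b b' r) :
    HasDerivAt (fun r => w (a r) (b r)) (a' * pdt w (a r) (b r) + b' * pdx w (a r) (b r)) r := by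
  have key := (hw (a r, b r)).hasFDerivAt.comp_hasDerivAt r (ha.prodMk hb)
  refine key.congr_deriv ?_
  rw [pdt_eq_fderiv hw, pdx_eq_fderiv hw, ← smul_eq_mul, ← smul_eq_mul, ← map_smul, ← map_smul,
    ← map_add]
  simp

theorem admissible_transformation_T3
    (h : ℝ → ℝ) (v : ℝ → ℝ → ℝ)
    (hv : ContDiff ℝ 2 fun p : ℝ × ℝ => v p.1 p.2)
    (hvpde : ∀ s y, pdt (pdt v) s y = pdx (pdx v) s y + h (v s y))
    (u : ℝ → ℝ → ℝ)
    (hu : u = fun t x => v (Real.exp (-x) * Real.sinh t) (Real.exp (-x) * Real.cosh t)) :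
    ∀ t x, pdt (pdt u) t x = pdx (pdx u) t x + Real.exp (-(2 * x)) * h (u t x) := by
  intro t x
  have dv := hv.differentiable (by norm_num)
  have dvt := (contDiff_pdt hv).differentiable (by norm_num)
  have dvx := (contDiff_pdx hv).differentiable (by norm_num)
  have hat (t x : ℝ) : HasDerivAt (fun s => Real.exp (-x) * Real.sinh s)
      (Real.exp (-x) * Real.cosh t) t := (Real.hasDerivAt_sinh t).const_mul _
  have hbt (t x : ℝ) : HasDerivAt (fun s => Real.exp (-x) * Real.cosh s)
      (Real.exp (-x) * Real.sinh t) t := (Real.hasDerivAt_cosh t).const_mul _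
  have hx (c x : ℝ) : HasDerivAt (fun y => Real.exp (-y) * c) (-(Real.exp (-x) * c)) x :=
    ((hasDerivAt_neg x).exp.mul_const c).congr_deriv (by ring)
  have hut : pdt u = fun t x =>
      Real.exp (-x) * Real.cosh t *
        pdt v (Real.exp (-x) * Real.sinh t) (Real.exp (-x) * Real.cosh t) +
      Real.exp (-x) * Real.sinh t *
        pdx v (Real.exp (-x) * Real.sinh t) (Real.exp (-x) * Real.cosh t) := by
    subst hu
    funext t x
    exact (hasDerivAt_comp_pd dv (hat t x) (hbt t x)).deriv
  have hux : pdx u = fun t x =>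
      -(Real.exp (-x) * Real.sinh t) *
        pdt v (Real.exp (-x) * Real.sinh t) (Real.exp (-x) * Real.cosh t) +
      -(Real.exp (-x) * Real.cosh t) *
        pdx v (Real.exp (-x) * Real.sinh t) (Real.exp (-x) * Real.cosh t) := by
    subst hu
    funext t x
    exact (hasDerivAt_comp_pd dv (hx _ x) (hx _ x)).deriv
  have hutt := (((hbt t x).fun_mul (hasDerivAt_comp_pd dvt (hat t x) (hbt t x))).fun_add
    ((hat t x).fun_mul (hasDerivAt_comp_pd dvx (hat t x) (hbt t x)))).deriv
  have huxx := (((hx (Real.sinh t) x).fun_neg.fun_mul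
      (hasDerivAt_comp_pd dvt (hx (Real.sinh t) x) (hx (Real.cosh t) x))).fun_add
    ((hx (Real.cosh t) x).fun_neg.fun_mul
      (hasDerivAt_comp_pd dvx (hx (Real.sinh t) x) (hx (Real.cosh t) x)))).deriv
  have hexp : Real.exp (-(2 * x)) =
      (Real.exp (-x) * Real.cosh t) ^ 2 - (Real.exp (-x) * Real.sinh t) ^ 2 := by
    rw [mul_pow, mul_pow, ← mul_sub, Real.cosh_sq_sub_sinh_sq, mul_one, ← Real.exp_nat_mul]
    congr 1
    push_cast
    ring
  have hpde := hvpde (Real.exp (-x) * Real.sinh t) (Real.exp (-x) * Real.cosh t)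
  rw [hut, hux, hu, hexp]
  refine hutt.trans ((?_ : _ = _).trans (congrArg (· + _) huxx.symm))
  linear_combination ((Real.exp (-x) * Real.cosh t) ^ 2 - (Real.exp (-x) * Real.sinh t) ^ 2) * hpde
end

section
/- Let h : ℝ → ℝ and let v : ℝ × ℝ → ℝ be twice continuously differentiable with v_tt(s,y) = v_xx(s,y) + y^{-2}·h(v(s,y)) for all (s,y) with y ≠ 0. Then the function u(t,x) := v(t/(x² − t²), x/(x² − t²)) satisfies u_tt(t,x) = u_xx(t,x) + x^{-2}·h(u(t,x)) at every point (t,x) with x + t ≠ 0, x − t ≠ 0 and x ≠ 0. -/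
lemma hasDerivAt_comp_curve {w : ℝ → ℝ → ℝ} (hw : Differentiable ℝ fun p : ℝ × ℝ => w p.1 p.2)
    {α β : ℝ → ℝ} {α' β' s : ℝ} (hα : HasDerivAt α α' s) (hβ : HasDerivAt β β' s) :
    HasDerivAt (fun r => w (α r) (β r))
      (pdt w (α s) (β s) * α' + pdx w (α s) (β s) * β') s := by
  have hF := (hw (α s, β s)).hasFDerivAt
  have h1 : pdt w (α s) (β s) = fderiv ℝ (fun p : ℝ × ℝ => w p.1 p.2) (α s, β s) (1, 0) :=
    (HasFDerivAt.comp_hasDerivAt (f := fun r => (r, β s)) (α s) hF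
      ((hasDerivAt_id _).prodMk (hasDerivAt_const _ _))).deriv
  have h2 : pdx w (α s) (β s) = fderiv ℝ (fun p : ℝ × ℝ => w p.1 p.2) (α s, β s) (0, 1) :=
    (HasFDerivAt.comp_hasDerivAt (f := fun r => (α s, r)) (β s) hF
      ((hasDerivAt_const _ _).prodMk (hasDerivAt_id _))).deriv
  have h3 := HasFDerivAt.comp_hasDerivAt (f := fun r => (α r, β r)) s hF (hα.prodMk hβ)
  have h4 : ((α', β') : ℝ × ℝ) = α' • ((1, 0) : ℝ × ℝ) + β' • ((0, 1) : ℝ × ℝ) := by simp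
  rw [h4, map_add, map_smul, map_smul, ← h1, ← h2] at h3
  simpa [mul_comm, Function.comp_def] using h3

lemma differentiable_pdt {v : ℝ → ℝ → ℝ} (hv : ContDiff ℝ 2 fun p : ℝ × ℝ => v p.1 p.2) :
    Differentiable ℝ fun p : ℝ × ℝ => pdt v p.1 p.2 := by
  have hd : Differentiable ℝ (fderiv ℝ fun p : ℝ × ℝ => v p.1 p.2) :=
    (hv.fderiv_right (m := 1) (by norm_num)).differentiable (by norm_num)
  have h1 : (fun p : ℝ × ℝ => pdt v p.1 p.2)
      = fun p => fderiv ℝ (fun p : ℝ × ℝ => v p.1 p.2) p (1, 0) := by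
    funext p
    exact (HasFDerivAt.comp_hasDerivAt (f := fun r => (r, p.2)) p.1
      ((hv.differentiable (by norm_num)) (p.1, p.2)).hasFDerivAt
      ((hasDerivAt_id _).prodMk (hasDerivAt_const _ _))).deriv
  rw [h1]
  exact hd.clm_apply (differentiable_const _)

lemma differentiable_pdx {v : ℝ → ℝ → ℝ} (hv : ContDiff ℝ 2 fun p : ℝ × ℝ => v p.1 p.2) :
    Differentiable ℝ fun p : ℝ × ℝ => pdx v p.1 p.2 := by
  have hd : Differentiable ℝ (fderiv ℝ fun p : ℝ × ℝ => v p.1 p.2) :=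
    (hv.fderiv_right (m := 1) (by norm_num)).differentiable (by norm_num)
  have h1 : (fun p : ℝ × ℝ => pdx v p.1 p.2)
      = fun p => fderiv ℝ (fun p : ℝ × ℝ => v p.1 p.2) p (0, 1) := by
    funext p
    exact (HasFDerivAt.comp_hasDerivAt (f := fun r => (p.1, r)) p.2
      ((hv.differentiable (by norm_num)) (p.1, p.2)).hasFDerivAt
      ((hasDerivAt_const _ _).prodMk (hasDerivAt_id _))).deriv
  rw [h1]
  exact hd.clm_apply (differentiable_const _)

/-- Second-order chain rule along the curve `(α, β)`. The two mixed partials are kept apart, so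
their symmetry is not involved. -/
lemma deriv_deriv_comp_curve {v : ℝ → ℝ → ℝ} (hv : ContDiff ℝ 2 fun p : ℝ × ℝ => v p.1 p.2)
    {α β α' β' : ℝ → ℝ} {α'' β'' s : ℝ}
    (hα : ∀ᶠ r in nhds s, HasDerivAt α (α' r) r) (hβ : ∀ᶠ r in nhds s, HasDerivAt β (β' r) r)
    (hα' : HasDerivAt α' α'' s) (hβ' : HasDerivAt β' β'' s) :
    deriv (fun q => deriv (fun r => v (α r) (β r)) q) s =
      pdt (pdt v) (α s) (β s) * α' s ^ 2
      + (pdx (pdt v) (α s) (β s) + pdt (pdx v) (α s) (β s)) * (α' s * β' s)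
      + pdx (pdx v) (α s) (β s) * β' s ^ 2
      + pdt v (α s) (β s) * α'' + pdx v (α s) (β s) * β'' := by
  have he : (fun q => deriv (fun r => v (α r) (β r)) q) =ᶠ[nhds s]
      fun q => pdt v (α q) (β q) * α' q + pdx v (α q) (β q) * β' q := by
    filter_upwards [hα, hβ] with q h1 h2
    exact (hasDerivAt_comp_curve (hv.differentiable (by norm_num)) h1 h2).deriv
  have h1 := hasDerivAt_comp_curve (differentiable_pdt hv) hα.self_of_nhds hβ.self_of_nhds
  have h2 := hasDerivAt_comp_curve (differentiable_pdx hv) hα.self_of_nhds hβ.self_of_nhds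
  have h3 : HasDerivAt (fun q => pdt v (α q) (β q) * α' q + pdx v (α q) (β q) * β' q) _ s :=
    (h1.mul hα').add (h2.mul hβ')
  rw [he.deriv_eq, h3.deriv]
  ring

theorem admissible_transformation_T4a
    (h : ℝ → ℝ) (v : ℝ → ℝ → ℝ)
    (hv : ContDiff ℝ 2 fun p : ℝ × ℝ => v p.1 p.2)
    (hvpde : ∀ s y, y ≠ 0 → pdt (pdt v) s y = pdx (pdx v) s y + (y ^ 2)⁻¹ * h (v s y))
    (u : ℝ → ℝ → ℝ)
    (hu : u = fun t x => v (t / (x ^ 2 - t ^ 2)) (x / (x ^ 2 - t ^ 2))) :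
    ∀ t x, x + t ≠ 0 → x - t ≠ 0 → x ≠ 0 →
      pdt (pdt u) t x = pdx (pdx u) t x + (x ^ 2)⁻¹ * h (u t x) := by
  intro t x hp hm hx
  have hD : x ^ 2 - t ^ 2 ≠ 0 := by
    rw [sq_sub_sq]; exact mul_ne_zero hp hm
  have dDt : ∀ r, HasDerivAt (fun r => x ^ 2 - r ^ 2) (-(2 * r)) r := fun r => by
    simpa using ((hasDerivAt_pow 2 r).const_sub (x ^ 2))
  have dDx : ∀ r, HasDerivAt (fun r => r ^ 2 - t ^ 2) (2 * r) r := fun r => by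
    simpa using ((hasDerivAt_pow 2 r).sub_const (t ^ 2))
  have evt : ∀ᶠ r in nhds t, x ^ 2 - r ^ 2 ≠ 0 := (dDt t).continuousAt.eventually_ne hD
  have evx : ∀ᶠ r in nhds x, r ^ 2 - t ^ 2 ≠ 0 := (dDx x).continuousAt.eventually_ne hD
  have sq : ∀ r : ℝ, HasDerivAt (fun r : ℝ => r ^ 2) (2 * r) r := fun r => by
    simpa using hasDerivAt_pow 2 r
  have Ht := deriv_deriv_comp_curve hv (s := t)
    (α := fun r => r / (x ^ 2 - r ^ 2)) (β := fun r => x / (x ^ 2 - r ^ 2))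
    (α' := fun r => (x ^ 2 + r ^ 2) / (x ^ 2 - r ^ 2) ^ 2)
    (β' := fun r => (2 * x * r) / (x ^ 2 - r ^ 2) ^ 2)
    (α'' := (2 * t * (t ^ 2 + 3 * x ^ 2)) / (x ^ 2 - t ^ 2) ^ 3)
    (β'' := (2 * x * (x ^ 2 + 3 * t ^ 2)) / (x ^ 2 - t ^ 2) ^ 3)
    (by
      filter_upwards [evt] with r hr
      refine ((hasDerivAt_id r).div (dDt r) hr).congr_deriv ?_
      simp only [id]; congr 1; ring)
    (by
      filter_upwards [evt] with r hr
      refine ((hasDerivAt_const r x).div (dDt r) hr).congr_deriv ?_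
      congr 1; ring)
    (by
      refine (((sq t).const_add (x ^ 2)).div ((dDt t).pow 2) (pow_ne_zero 2 hD)).congr_deriv ?_
      simp only [Pi.pow_apply]; field_simp; push_cast; ring)
    (by
      refine (((hasDerivAt_id t).const_mul (2 * x)).div ((dDt t).pow 2)
        (pow_ne_zero 2 hD)).congr_deriv ?_
      simp only [Pi.pow_apply, id]; field_simp; push_cast; ring)
  have Hx := deriv_deriv_comp_curve hv (s := x)
    (α := fun r => t / (r ^ 2 - t ^ 2)) (β := fun r => r / (r ^ 2 - t ^ 2))
    (α' := fun r => (-(2 * t) * r) / (r ^ 2 - t ^ 2) ^ 2)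
    (β' := fun r => (-(t ^ 2) - r ^ 2) / (r ^ 2 - t ^ 2) ^ 2)
    (α'' := (2 * t * (t ^ 2 + 3 * x ^ 2)) / (x ^ 2 - t ^ 2) ^ 3)
    (β'' := (2 * x * (x ^ 2 + 3 * t ^ 2)) / (x ^ 2 - t ^ 2) ^ 3)
    (by
      filter_upwards [evx] with r hr
      refine ((hasDerivAt_const r t).div (dDx r) hr).congr_deriv ?_
      congr 1; ring)
    (by
      filter_upwards [evx] with r hr
      refine ((hasDerivAt_id r).div (dDx r) hr).congr_deriv ?_
      simp only [id]; congr 1; ring)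
    (by
      refine (((hasDerivAt_id x).const_mul (-(2 * t))).div ((dDx x).pow 2)
        (pow_ne_zero 2 hD)).congr_deriv ?_
      simp only [Pi.pow_apply, id]; field_simp; push_cast; ring)
    (by
      refine (((sq x).const_sub (-(t ^ 2))).div ((dDx x).pow 2)
        (pow_ne_zero 2 hD)).congr_deriv ?_
      simp only [Pi.pow_apply]; field_simp; push_cast; ring)
  have hpde := hvpde (t / (x ^ 2 - t ^ 2)) (x / (x ^ 2 - t ^ 2)) (div_ne_zero hx hD)
  subst hu
  refine Ht.trans (Eq.trans ?_ (congrArg (· + _) Hx.symm))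
  simp only [hpde]
  -- What remains is an identity of rational functions in `t`, `x` and the values below.
  generalize h (v (t / (x ^ 2 - t ^ 2)) (x / (x ^ 2 - t ^ 2))) = H
  generalize pdx (pdx v) (t / (x ^ 2 - t ^ 2)) (x / (x ^ 2 - t ^ 2)) = A
  generalize pdx (pdt v) (t / (x ^ 2 - t ^ 2)) (x / (x ^ 2 - t ^ 2)) = B
  generalize pdt (pdx v) (t / (x ^ 2 - t ^ 2)) (x / (x ^ 2 - t ^ 2)) = C
  generalize pdt v (t / (x ^ 2 - t ^ 2)) (x / (x ^ 2 - t ^ 2)) = E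
  generalize pdx v (t / (x ^ 2 - t ^ 2)) (x / (x ^ 2 - t ^ 2)) = F
  field_simp
  ring
end

section
/- Let b ∈ ℝ and let χ : ℝ → ℝ be twice differentiable. Let f, g : ℝ × ℝ → ℝ (with arguments written (x,u)) be such that f is continuously differentiable with respect to its second argument and g is twice differentiable with respect to its second argument. Suppose that for all (x,u) ∈ ℝ²: (b·u + χ(x))·f_u(x,u) = 0 and (b·u + χ(x))·g_u(x,u) = b·g(x,u) − χ''(x)·f(x,u), where f_u and g_u denote partial derivatives with respect to u. If moreover (f_u(x,u), g_uu(x,u)) ≠ (0,0) for every (x,u) ∈ ℝ², then b = 0 and χ(x) = 0 for all x ∈ ℝ. -/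
/-!
At a point where the coefficient `b * u + χ x` is nonzero, the first identity gives `f_u = 0`.
Differentiating the second identity in `u`, the terms `b * g_u` cancel, leaving
`(b * u + χ x) * g_uu = - χ'' * f_u = 0`, so `g_uu = 0` too, against nondegeneracy. Hence
`b * u + χ x` vanishes identically; `u = 0` and `u = 1` then give `χ x = 0` and `b = 0`.
-/

theorem no_DuZ_in_appropriate_subalgebras
    (b : ℝ) (χ : ℝ → ℝ) (hχ : ContDiff ℝ 2 χ)
    (f g : ℝ → ℝ → ℝ)
    (hf : ∀ x, ContDiff ℝ 1 (f x))
    (hg : ∀ x, ContDiff ℝ 2 (g x))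
    (heq1 : ∀ x u, (b * u + χ x) * deriv (f x) u = 0)
    (heq2 : ∀ x u, (b * u + χ x) * deriv (g x) u
      = b * g x u - deriv (deriv χ) x * f x u)
    (hnondeg : ∀ x u, (deriv (f x) u, deriv (deriv (g x)) u) ≠ (0, 0)) :
    b = 0 ∧ ∀ x, χ x = 0 := by
  have key : ∀ x u, b * u + χ x = 0 := by
    intro x u
    by_contra hne
    have hfu : deriv (f x) u = 0 := (mul_eq_zero.mp (heq1 x u)).resolve_left hne
    have hf' : HasDerivAt (f x) (deriv (f x) u) u :=
      ((hf x).differentiable (by norm_num) u).hasDerivAt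
    have hg' : HasDerivAt (g x) (deriv (g x) u) u :=
      ((hg x).differentiable (by norm_num) u).hasDerivAt
    have hg'' : HasDerivAt (deriv (g x)) (deriv (deriv (g x)) u) u := by
      have h : ContDiff ℝ (1 + 1) (g x) := by simpa [one_add_one_eq_two] using hg x
      have h1 : ContDiff ℝ 1 (deriv (g x)) := (contDiff_succ_iff_deriv.mp h).2.2
      exact (h1.differentiable (by norm_num) u).hasDerivAt
    have hL := (((hasDerivAt_id u).const_mul b).add_const (χ x)).mul hg''
    have hR := (hg'.const_mul b).sub (hf'.const_mul (deriv (deriv χ) x))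
    have hLR := hL.unique (hR.congr_of_eventuallyEq (Filter.Eventually.of_forall (heq2 x)))
    simp only [id, mul_one, hfu, mul_zero, sub_zero] at hLR
    have hguu : deriv (deriv (g x)) u = 0 :=
      (mul_eq_zero.mp (by linarith)).resolve_left hne
    exact hnondeg x u (by rw [hfu, hguu])
  have hχ0 : ∀ x, χ x = 0 := fun x => by simpa using key x 0
  exact ⟨by simpa [hχ0] using key 0 1, hχ0⟩
end

section
/- Let p, δ, s ∈ ℝ and let f̂, ĝ : ℝ → ℝ. Let u : ℝ × ℝ → ℝ be twice differentiable with u(t,x) ≠ 0 for all (t,x), and suppose that for all (t,x) ∈ ℝ²: u_tt(t,x) = |u(t,x)|^p · ( f̂(x − δ·ln|u(t,x)|)·u_xx(t,x) + ĝ(x − δ·ln|u(t,x)|)·u(t,x) ). Then the function v(t,x) := e^{2s}·u(e^{ps}·t, x − 2δs) satisfies v(t,x) ≠ 0 and v_tt(t,x) = |v(t,x)|^p · ( f̂(x − δ·ln|v(t,x)|)·v_xx(t,x) + ĝ(x − δ·ln|v(t,x)|)·v(t,x) ) for all (t,x) ∈ ℝ². -/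
/-- No differentiability is needed: if one side has the junk value `0`, so does the other, including
when `a = 0` or `b = 0`. -/
lemma pdt_rescale (a b c : ℝ) (w : ℝ → ℝ → ℝ) :
    pdt (fun t x => a * w (b * t) (x - c)) = fun t x => (a * b) * pdt w (b * t) (x - c) := by
  funext t x
  simp only [pdt]
  rw [deriv_const_mul_field, deriv_comp_mul_left b (fun r => w r (x - c)) t, smul_eq_mul, mul_assoc]

/-- As for `pdt_rescale`, no differentiability is needed. -/
lemma pdx_rescale (a b c : ℝ) (w : ℝ → ℝ → ℝ) :
    pdx (fun t x => a * w (b * t) (x - c)) = fun t x => a * pdx w (b * t) (x - c) := by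
  funext t x
  simp only [pdx]
  rw [deriv_const_mul_field, deriv_comp_sub_const (f := fun y => w (b * t) y)]

theorem case1_symmetry_flow
    (p δ s : ℝ) (fhat ghat : ℝ → ℝ)
    (u : ℝ → ℝ → ℝ)
    (hu : ContDiff ℝ 2 fun q : ℝ × ℝ => u q.1 q.2)
    (hune : ∀ t x, u t x ≠ 0)
    (hpde : ∀ t x, pdt (pdt u) t x
      = |u t x| ^ p * (fhat (x - δ * Real.log |u t x|) * pdx (pdx u) t x
          + ghat (x - δ * Real.log |u t x|) * u t x))
    (v : ℝ → ℝ → ℝ)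
    (hv : v = fun t x => Real.exp (2 * s) * u (Real.exp (p * s) * t) (x - 2 * δ * s)) :
    ∀ t x, v t x ≠ 0 ∧
      pdt (pdt v) t x
        = |v t x| ^ p * (fhat (x - δ * Real.log |v t x|) * pdx (pdx v) t x
            + ghat (x - δ * Real.log |v t x|) * v t x) := by
  subst hv
  intro t x
  have hne := hune (Real.exp (p * s) * t) (x - 2 * δ * s)
  refine ⟨mul_ne_zero (Real.exp_ne_zero _) hne, ?_⟩
  have h := hpde (Real.exp (p * s) * t) (x - 2 * δ * s)
  rw [pdt_rescale, pdt_rescale, pdx_rescale, pdx_rescale]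
  beta_reduce
  rw [h]
  generalize u (Real.exp (p * s) * t) (x - 2 * δ * s) = U at hne ⊢
  have hlog : x - δ * Real.log |Real.exp (2 * s) * U| = x - 2 * δ * s - δ * Real.log |U| := by
    rw [abs_mul, Real.abs_exp, Real.log_mul (Real.exp_ne_zero _) (abs_ne_zero.mpr hne),
      Real.log_exp]
    ring
  have hpow : |Real.exp (2 * s) * U| ^ p = Real.exp (p * s) * Real.exp (p * s) * |U| ^ p := by
    rw [abs_mul, Real.abs_exp, Real.mul_rpow (Real.exp_nonneg _) (abs_nonneg _), ← Real.exp_mul,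
      ← Real.exp_add]
    ring_nf
  rw [hlog, hpow]
  ring
end
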